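/- Let ε ∈ (0, 1/30], let G = (V, E, w) be a weighted graph with positive edge weights, and let S ⊆ V be a fixed subset whose cut weight satisfies 1 ≤ w(S,S̄) ≤ 4. Independently for each edge e ∈ E, keep e with probability p_e = min{w(e)/ε², 1}, and assign kept edges the rescaled weight w̃(e) = w(e)/p_e (non-kept edges get w̃(e) = 0); let w̃(S,S̄) = Σ over crossing edges e of w̃(e). Then with probability at least 8/9, |w̃(S,S̄) − w(S,S̄)| ≤ 3·ε·w(S,S̄). -/

import Mathlib

open scoped Classical

/-- Weight of the cut `(S, S̄)`. -/
noncomputable def cutW {n : ℕ} (w : Fin n → Fin n → ℝ) (S : Finset (Fin n)) : ℝ :=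
  ∑ p ∈ Finset.univ.filter (fun p : Fin n × Fin n => p.1 ∈ S ∧ p.2 ∉ S), w p.1 p.2

/-- The sampling probability `p_e = min {w(e)/ε², 1}` of an edge. -/
noncomputable def keepProb {n : ℕ} (w : Fin n → Fin n → ℝ) (ε : ℝ)
    (p : Fin n × Fin n) : ℝ :=
  min (w p.1 p.2 / ε ^ 2) 1

/-- Whether the (undirected) edge `{u, v}` is kept, looked up at its canonical
representative with increasing endpoints. -/
noncomputable def keep {n : ℕ} (ω : {p : Fin n × Fin n // p.1 < p.2} → Bool)
    (u v : Fin n) : Bool :=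
  if h : u < v then ω ⟨(u, v), h⟩ else if h' : v < u then ω ⟨(v, u), h'⟩ else false

/-- Probability of the keep-outcome `ω`: edges are kept independently, edge `e`
with probability `keepProb w ε e`. -/
noncomputable def sampleProb {n : ℕ} (w : Fin n → Fin n → ℝ) (ε : ℝ)
    (ω : {p : Fin n × Fin n // p.1 < p.2} → Bool) : ℝ :=
  ∏ e : {p : Fin n × Fin n // p.1 < p.2},
    (if ω e then keepProb w ε e.1 else 1 - keepProb w ε e.1)

/-- The rescaled cut weight `w̃(S, S̄)`: each kept crossing edge contributes
`w(e)/p_e`, non-kept edges contribute `0`. -/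
noncomputable def wTilde {n : ℕ} (w : Fin n → Fin n → ℝ) (ε : ℝ)
    (ω : {p : Fin n × Fin n // p.1 < p.2} → Bool) (S : Finset (Fin n)) : ℝ :=
  ∑ p ∈ Finset.univ.filter (fun p : Fin n × Fin n => p.1 ∈ S ∧ p.2 ∉ S),
    (if keep ω p.1 p.2 then w p.1 p.2 / keepProb w ε p else 0)

/-!
The rescaled cut weight is a sum of independent terms: the crossing edge `e` contributes `w(e)/p_e`
with probability `p_e` and `0` otherwise. Its mean is therefore `w(S, S̄)`, and the variance of the
term at `e` is `w(e) (w(e)/p_e - w(e)) ≤ ε² w(e)`, because `w(e)/p_e` is either `max {ε², w(e)}` or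
`0`. Hence the variance of the sum is at most `ε² w(S, S̄)`, and Chebyshev's inequality with
deviation `3 ε w(S, S̄)` leaves a failure probability of at most `1 / (9 w(S, S̄)) ≤ 1/9`.
-/

open MeasureTheory ProbabilityTheory unitInterval

lemma one_sub_variance_div_sq_le_measureReal {Ω : Type*} [MeasurableSpace Ω] {μ : Measure Ω}
    [IsProbabilityMeasure μ] {X : Ω → ℝ} (hX : MemLp X 2 μ) {c : ℝ} (hc : 0 < c) :
    1 - Var[X; μ] / c ^ 2 ≤ μ.real {ω | |X ω - μ[X]| < c} := by
  have htail : μ.real {ω | c ≤ |X ω - μ[X]|} ≤ Var[X; μ] / c ^ 2 :=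
    ENNReal.toReal_le_of_le_ofReal (div_nonneg (variance_nonneg X μ) (sq_nonneg c))
      (meas_ge_le_variance_div_sq hX hc)
  have hcover : {ω | |X ω - μ[X]| < c} ∪ {ω | c ≤ |X ω - μ[X]|} = Set.univ := by
    ext ω
    simp [lt_or_ge]
  have hunion := measureReal_union_le (μ := μ) {ω | |X ω - μ[X]| < c} {ω | c ≤ |X ω - μ[X]|}
  rw [hcover, probReal_univ] at hunion
  linarith

section Bernoulli

lemma variance_bernoulliMeasure {X : Type*} [MeasurableSpace X] [MeasurableSingletonClass X]
    (x y : X) (p : I) (f : X → ℝ) :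
    Var[f; Ber(x, y, p)] = p * (1 - p) * (f x - f y) ^ 2 := by
  rw [variance_eq_integral (integrable_bernoulliMeasure x y p f).aemeasurable,
    integral_bernoulliMeasure, integral_bernoulliMeasure]
  simp only [smul_eq_mul]
  ring

variable {ι : Type*} [Fintype ι]

/-- The joint law of independent Bernoulli trials indexed by `ι`, the trial `e` yielding `true` with
probability `q e`. -/
noncomputable abbrev bernoulliPi (q : ι → I) : Measure (ι → Bool) :=
  Measure.pi fun e ↦ Ber(true, false, q e)

variable (q : ι → I)

lemma bernoulliPi_real_singleton (ω : ι → Bool) :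
    (bernoulliPi q).real {ω} = ∏ e, if ω e then (q e : ℝ) else 1 - q e := by
  rw [measureReal_def, Measure.pi_singleton, ENNReal.toReal_prod]
  refine Finset.prod_congr rfl fun e _ ↦ ?_
  rw [← measureReal_def, bernoulliMeasure_real_apply _ (measurableSet_singleton _)]
  cases ω e <;> simp

variable (s : Finset ι) (a : ι → ℝ)

lemma integral_bernoulliPi_sum_ite :
    ∫ ω, ∑ e ∈ s, (if ω e then a e else 0) ∂bernoulliPi q = ∑ e ∈ s, q e * a e := by
  rw [integral_finsetSum _ fun e _ ↦ .of_finite]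
  refine Finset.sum_congr rfl fun e _ ↦ ?_
  calc ∫ ω, (if ω e then a e else 0) ∂bernoulliPi q
      = ∫ b, (if b then a e else 0) ∂Ber(true, false, q e) :=
        integral_comp_eval (μ := fun e ↦ Ber(true, false, q e))
          (f := fun b : Bool ↦ if b then a e else 0) .of_discrete
    _ = q e * a e := by simp [integral_bernoulliMeasure]

lemma variance_bernoulliPi_sum_ite :
    Var[fun ω ↦ ∑ e ∈ s, (if ω e then a e else 0); bernoulliPi q] =
      ∑ e ∈ s, q e * (1 - q e) * a e ^ 2 := by
  let contribution (e : ι) (b : Bool) : ℝ := if b then a e else 0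
  have hindep : iIndepFun (fun e ω ↦ contribution e (ω e)) (bernoulliPi q) :=
    iIndepFun_pi fun e ↦ Measurable.of_discrete.aemeasurable
  have hsum := IndepFun.variance_sum (s := s) (fun e _ ↦ MemLp.of_discrete)
    fun e _ e' _ hne ↦ hindep.indepFun hne
  rw [Finset.sum_fn] at hsum
  refine hsum.trans (Finset.sum_congr rfl fun e _ ↦ ?_)
  calc Var[fun ω ↦ contribution e (ω e); bernoulliPi q]
      = Var[contribution e; Ber(true, false, q e)] :=
        (measurePreserving_eval (fun e ↦ Ber(true, false, q e)) e).variance_fun_comp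
          Measurable.of_discrete.aemeasurable
    _ = q e * (1 - q e) * a e ^ 2 := by simp [variance_bernoulliMeasure, contribution]

end Bernoulli

section CutEdges

/-- The unordered pairs of distinct elements of `V`, i.e. the potential edges, each encoded by its
increasing representative. -/
abbrev IncreasingPair (V : Type*) [LT V] : Type _ := {p : V × V // p.1 < p.2}

variable {V M : Type*} [Fintype V] [LinearOrder V] [AddCommMonoid M]

lemma sum_prod_eq_sum_increasingPair {f : V × V → M} (hf : ∀ v, f (v, v) = 0) :
    ∑ p, f p = ∑ e : IncreasingPair V, (f e.1 + f e.1.swap) := by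
  have hsplit (p : V × V) :
      f p = (if p.1 < p.2 then f p else 0) + if p.2 < p.1 then f p else 0 := by
    obtain ⟨u, v⟩ := p
    rcases lt_trichotomy u v with h | rfl | h
    · simp [h, h.not_gt]
    · simp [hf]
    · simp [h, h.not_gt]
  have hswap : ∑ p : V × V, (if p.2 < p.1 then f p else 0) =
      ∑ p : V × V, if p.1 < p.2 then f p.swap else 0 :=
    ((Equiv.prodComm V V).sum_comp fun p ↦ if p.2 < p.1 then f p else 0).symm
  calc ∑ p, f p
      = ∑ p : V × V with p.1 < p.2, (f p + f p.swap) := by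
        rw [Finset.sum_congr rfl fun p _ ↦ hsplit p, Finset.sum_add_distrib, hswap,
          ← Finset.sum_filter, ← Finset.sum_filter, Finset.sum_add_distrib]
    _ = ∑ e : IncreasingPair V, (f e.1 + f e.1.swap) :=
        Finset.sum_subtype _ (by simp) _

/-- The edges crossing the cut `(S, S̄)`, each listed once regardless of which endpoint lies in
`S`. -/
def cutEdges (S : Finset V) : Finset (IncreasingPair V) :=
  {e | ¬(e.1.1 ∈ S ↔ e.1.2 ∈ S)}

lemma sum_ordered_cut_eq_sum_cutEdges (S : Finset V) {f : V → V → M} (hf : ∀ u v, f u v = f v u) :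
    ∑ p : V × V with p.1 ∈ S ∧ p.2 ∉ S, f p.1 p.2 = ∑ e ∈ cutEdges S, f e.1.1 e.1.2 := by
  rw [Finset.sum_filter, sum_prod_eq_sum_increasingPair (by simp), cutEdges, Finset.sum_filter]
  refine Finset.sum_congr rfl fun ⟨(u, v), _⟩ _ ↦ ?_
  by_cases hu : u ∈ S <;> by_cases hv : v ∈ S <;> simp [hu, hv, hf v u]

end CutEdges

section Sampling

variable {n : ℕ} {w : Fin n → Fin n → ℝ} {ε : ℝ}

lemma keepProb_mem_unitInterval (hnonneg : ∀ u v, 0 ≤ w u v) (ε : ℝ) (p : Fin n × Fin n) :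
    keepProb w ε p ∈ I :=
  ⟨le_min (div_nonneg (hnonneg _ _) (sq_nonneg ε)) zero_le_one, min_le_right _ _⟩

lemma keepProb_symm (hsym : ∀ u v, w u v = w v u) (ε : ℝ) (u v : Fin n) :
    keepProb w ε (u, v) = keepProb w ε (v, u) := by
  simp only [keepProb, hsym u v]

lemma weight_eq_zero_of_keepProb_eq_zero (hε : ε ≠ 0) {p : Fin n × Fin n}
    (h : keepProb w ε p = 0) : w p.1 p.2 = 0 := by
  rcases min_choice (w p.1 p.2 / ε ^ 2) 1 with hmin | hmin
  · simpa [hε] using hmin.symm.trans h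
  · exact absurd (hmin.symm.trans h) one_ne_zero

lemma keepProb_mul_div_keepProb (hε : ε ≠ 0) (p : Fin n × Fin n) :
    keepProb w ε p * (w p.1 p.2 / keepProb w ε p) = w p.1 p.2 :=
  mul_div_cancel_of_imp' (weight_eq_zero_of_keepProb_eq_zero hε)

lemma div_keepProb_le_add (hε : ε ≠ 0) (hnonneg : ∀ u v, 0 ≤ w u v) (p : Fin n × Fin n) :
    w p.1 p.2 / keepProb w ε p ≤ ε ^ 2 + w p.1 p.2 := by
  have hw := hnonneg p.1 p.2
  refine div_le_of_le_mul₀ (keepProb_mem_unitInterval hnonneg ε p).1 (by positivity) ?_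
  rcases min_choice (w p.1 p.2 / ε ^ 2) 1 with hmin | hmin <;> rw [keepProb, hmin]
  · rw [add_mul, mul_div_cancel₀ _ (pow_ne_zero 2 hε)]
    exact le_add_of_nonneg_right (by positivity)
  · linarith [sq_nonneg ε]

lemma keepProb_mul_one_sub_mul_sq_div_le (hε : ε ≠ 0) (hnonneg : ∀ u v, 0 ≤ w u v)
    (p : Fin n × Fin n) :
    keepProb w ε p * (1 - keepProb w ε p) * (w p.1 p.2 / keepProb w ε p) ^ 2 ≤
      ε ^ 2 * w p.1 p.2 := by
  calc keepProb w ε p * (1 - keepProb w ε p) * (w p.1 p.2 / keepProb w ε p) ^ 2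
      = (w p.1 p.2 / keepProb w ε p - keepProb w ε p * (w p.1 p.2 / keepProb w ε p)) *
          (keepProb w ε p * (w p.1 p.2 / keepProb w ε p)) := by ring
    _ = (w p.1 p.2 / keepProb w ε p - w p.1 p.2) * w p.1 p.2 := by
      rw [keepProb_mul_div_keepProb hε p]
    _ ≤ ε ^ 2 * w p.1 p.2 := by
      gcongr
      · exact hnonneg _ _
      · exact sub_le_iff_le_add.2 (div_keepProb_le_add hε hnonneg p)

lemma keep_symm (ω : IncreasingPair (Fin n) → Bool) (u v : Fin n) : keep ω u v = keep ω v u := by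
  rcases lt_trichotomy u v with h | rfl | h
  · simp [keep, h, h.not_gt]
  · rfl
  · simp [keep, h, h.not_gt]

lemma keep_increasingPair (ω : IncreasingPair (Fin n) → Bool) (e : IncreasingPair (Fin n)) :
    keep ω e.1.1 e.1.2 = ω e :=
  dif_pos e.2

lemma cutW_eq_sum_cutEdges (hsym : ∀ u v, w u v = w v u) (S : Finset (Fin n)) :
    cutW w S = ∑ e ∈ cutEdges S, w e.1.1 e.1.2 :=
  sum_ordered_cut_eq_sum_cutEdges S hsym

lemma wTilde_eq_sum_cutEdges (hsym : ∀ u v, w u v = w v u) (ω : IncreasingPair (Fin n) → Bool)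
    (S : Finset (Fin n)) :
    wTilde w ε ω S =
      ∑ e ∈ cutEdges S, if ω e then w e.1.1 e.1.2 / keepProb w ε e.1 else 0 := by
  have h := sum_ordered_cut_eq_sum_cutEdges S
    (f := fun u v ↦ if keep ω u v then w u v / keepProb w ε (u, v) else 0)
    fun u v ↦ by rw [keep_symm, hsym, keepProb_symm hsym]
  simpa only [wTilde, keep_increasingPair] using h

/-- The law of the keep-outcome: the measure whose point masses are given by `sampleProb`, so that
`wTilde` has a mean and a variance in the sense of `ProbabilityTheory`. -/
noncomputable def sampleMeasure (hnonneg : ∀ u v, 0 ≤ w u v) (ε : ℝ) :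
    Measure (IncreasingPair (Fin n) → Bool) :=
  bernoulliPi fun e ↦ ⟨keepProb w ε e.1, keepProb_mem_unitInterval hnonneg ε e.1⟩

instance (hnonneg : ∀ u v, 0 ≤ w u v) (ε : ℝ) : IsProbabilityMeasure (sampleMeasure hnonneg ε) :=
  inferInstanceAs (IsProbabilityMeasure (bernoulliPi _))

lemma sampleMeasure_real_singleton (hnonneg : ∀ u v, 0 ≤ w u v) (ε : ℝ)
    (ω : IncreasingPair (Fin n) → Bool) :
    (sampleMeasure hnonneg ε).real {ω} = sampleProb w ε ω := by
  rw [sampleMeasure, bernoulliPi_real_singleton, sampleProb]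

lemma sum_sampleProb_eq_sampleMeasure_real (hnonneg : ∀ u v, 0 ≤ w u v) (ε : ℝ)
    (A : Finset (IncreasingPair (Fin n) → Bool)) :
    ∑ ω ∈ A, sampleProb w ε ω = (sampleMeasure hnonneg ε).real A := by
  simp_rw [← sum_measureReal_singleton, sampleMeasure_real_singleton]

lemma integral_wTilde (hε : ε ≠ 0) (hsym : ∀ u v, w u v = w v u) (hnonneg : ∀ u v, 0 ≤ w u v)
    (S : Finset (Fin n)) :
    ∫ ω, wTilde w ε ω S ∂sampleMeasure hnonneg ε = cutW w S := by
  simp_rw [wTilde_eq_sum_cutEdges hsym, cutW_eq_sum_cutEdges hsym, sampleMeasure,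
    integral_bernoulliPi_sum_ite, keepProb_mul_div_keepProb hε]

lemma variance_wTilde_le (hε : ε ≠ 0) (hsym : ∀ u v, w u v = w v u)
    (hnonneg : ∀ u v, 0 ≤ w u v) (S : Finset (Fin n)) :
    Var[fun ω ↦ wTilde w ε ω S; sampleMeasure hnonneg ε] ≤ ε ^ 2 * cutW w S := by
  simp_rw [wTilde_eq_sum_cutEdges hsym, cutW_eq_sum_cutEdges hsym, sampleMeasure,
    variance_bernoulliPi_sum_ite, Finset.mul_sum]
  exact Finset.sum_le_sum fun e _ ↦ keepProb_mul_one_sub_mul_sq_div_le hε hnonneg e.1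

theorem one_sub_div_sq_le_sum_sampleProb (hε : ε ≠ 0) (hsym : ∀ u v, w u v = w v u)
    (hnonneg : ∀ u v, 0 ≤ w u v) (S : Finset (Fin n)) {t : ℝ} (ht : 0 < t) :
    1 - ε ^ 2 * cutW w S / t ^ 2 ≤
      ∑ ω with |wTilde w ε ω S - cutW w S| ≤ t, sampleProb w ε ω := by
  have hmemLp : MemLp (fun ω ↦ wTilde w ε ω S) 2 (sampleMeasure hnonneg ε) := .of_discrete
  calc 1 - ε ^ 2 * cutW w S / t ^ 2
      ≤ 1 - Var[fun ω ↦ wTilde w ε ω S; sampleMeasure hnonneg ε] / t ^ 2 := by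
        gcongr
        exact variance_wTilde_le hε hsym hnonneg S
    _ ≤ (sampleMeasure hnonneg ε).real {ω | |wTilde w ε ω S - cutW w S| < t} := by
        simpa only [integral_wTilde hε hsym hnonneg] using
          one_sub_variance_div_sq_le_measureReal hmemLp ht
    _ ≤ (sampleMeasure hnonneg ε).real {ω | |wTilde w ε ω S - cutW w S| ≤ t} :=
        measureReal_mono fun ω (hω : |_| < t) ↦ hω.le
    _ = ∑ ω with |wTilde w ε ω S - cutW w S| ≤ t, sampleProb w ε ω := by
        rw [sum_sampleProb_eq_sampleMeasure_real hnonneg, Finset.coe_filter_univ]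

end Sampling

theorem stmt_4_general (n : ℕ) (ε : ℝ) (w : Fin n → Fin n → ℝ) (hε : 0 < ε)
    (hsym : ∀ u v, w u v = w v u) (hnonneg : ∀ u v, 0 ≤ w u v)
    (S : Finset (Fin n)) (hlo : 1 ≤ cutW w S) :
    (8 : ℝ) / 9 ≤
      ∑ ω with |wTilde w ε ω S - cutW w S| ≤ 3 * ε * cutW w S, sampleProb w ε ω := by
  have hW : 0 < cutW w S := zero_lt_one.trans_le hlo
  calc (8 : ℝ) / 9
      ≤ 1 - 1 / (9 * cutW w S) := by
        have hfail : 1 / (9 * cutW w S) ≤ 1 / 9 := by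
          gcongr
          linarith
        linarith
    _ = 1 - ε ^ 2 * cutW w S / (3 * ε * cutW w S) ^ 2 := by field_simp; ring
    _ ≤ _ := one_sub_div_sq_le_sum_sampleProb hε.ne' hsym hnonneg S (by positivity)

theorem stmt_4 (n : ℕ) (ε : ℝ) (w : Fin n → Fin n → ℝ)
    (hε : 0 < ε) (hε' : ε ≤ 1 / 30)
    (hsym : ∀ u v, w u v = w v u) (hnonneg : ∀ u v, 0 ≤ w u v)
    (hdiag : ∀ u, w u u = 0)
    (S : Finset (Fin n)) (hlo : 1 ≤ cutW w S) (hhi : cutW w S ≤ 4) :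
    (8 : ℝ) / 9 ≤
      ∑ ω ∈ Finset.univ.filter
          (fun ω : {p : Fin n × Fin n // p.1 < p.2} → Bool =>
            |wTilde w ε ω S - cutW w S| ≤ 3 * ε * cutW w S),
        sampleProb w ε ω :=
  stmt_4_general n ε w hε hsym hnonneg S hlo
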